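/- arXiv:1305.4482 — 4 statements merged into one kernel-verified Lean document; each statement's English description precedes it below -/
import Mathlib

section
/- Let H be a real inner product space equipped with its Borel σ-algebra, Π a measure on H, A a measurable subset of H, η₀ ∈ H, n a positive real number, t ∈ ℝ, and δ ≥ 0. Let ℓ, ψ : H → ℝ be Borel measurable, W : H → ℝ linear, ψ₁ ∈ H; define R(η) = ℓ(η) − ℓ(η₀) + (n/2)‖η − η₀‖² − √n·W(η − η₀), r(η) = ψ(η) − ψ(η₀) − ⟨ψ₁, η − η₀⟩, η_t = η − (t/√n)ψ₁, and ψ̂ = ψ(η₀) + W(ψ₁)/√n. Assume that |t√n·r(η) + R(η) − R(η_t)| ≤ δ for every η ∈ A, and that the integrals D = ∫_A exp(ℓ(η) − ℓ(η₀)) dΠ(η) and N_t = ∫_A exp(ℓ(η_t) − ℓ(η₀)) dΠ(η) are finite and strictly positive. Then ∫_A exp(t√n(ψ(η) − ψ̂) + ℓ(η) − ℓ(η₀)) dΠ(η) is finite and satisfies e^{−δ}·e^{t²‖ψ₁‖²/2}·(N_t/D) ≤ (1/D)·∫_A exp(t√n(ψ(η) − ψ̂) + ℓ(η) − ℓ(η₀))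 dΠ(η) ≤ e^{δ}·e^{t²‖ψ₁‖²/2}·(N_t/D). -/
open MeasureTheory RealInnerProductSpace

/-!
Write `h = η - η₀`. Translating `η` by `-(t / √n) • ψ₁` decreases the quadratic term
`n / 2 * ‖h‖ ^ 2` of the LAN expansion by `t √n ⟪ψ₁, h⟫ - t² ‖ψ₁‖² / 2` and its linear term
`√n W h` by `t W ψ₁`. Up to the Gaussian exponent `t² ‖ψ₁‖² / 2`, the difference of the two is the
leading part `t √n ⟪ψ₁, h⟫ - t W ψ₁` of `t √n (ψ η - ψhat)`. Hence the tilted log-likelihood at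
`η` is the log-likelihood at the translated point plus `t² ‖ψ₁‖² / 2`, with an error made only of
remainders; it is at most `δ` in absolute value, so exponentiating and integrating gives the two
bounds.
-/

section IntegralExp

variable {α : Type*} [MeasurableSpace α] {μ : Measure α} {f g : α → ℝ} {c : ℝ}

theorem integrable_exp_of_ae_le_add (hf : AEMeasurable f μ)
    (hg : Integrable (fun x => Real.exp (g x)) μ) (hfg : ∀ᵐ x ∂μ, f x ≤ c + g x) :
    Integrable (fun x => Real.exp (f x)) μ := by
  refine (hg.const_mul (Real.exp c)).mono' hf.exp.aestronglyMeasurable ?_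
  filter_upwards [hfg] with x hx
  rwa [Real.norm_eq_abs, Real.abs_exp, ← Real.exp_add, Real.exp_le_exp]

theorem integral_exp_le_exp_mul_integral_exp
    (hg : Integrable (fun x => Real.exp (g x)) μ) (hfg : ∀ᵐ x ∂μ, f x ≤ c + g x) :
    ∫ x, Real.exp (f x) ∂μ ≤ Real.exp c * ∫ x, Real.exp (g x) ∂μ := by
  rw [← integral_const_mul]
  refine integral_mono_of_nonneg (ae_of_all μ fun x => (Real.exp_pos _).le) (hg.const_mul _) ?_
  filter_upwards [hfg] with x hx
  rwa [← Real.exp_add, Real.exp_le_exp]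

theorem exp_mul_integral_exp_le_integral_exp
    (hf : Integrable (fun x => Real.exp (f x)) μ) (hgf : ∀ᵐ x ∂μ, c + g x ≤ f x) :
    Real.exp c * ∫ x, Real.exp (g x) ∂μ ≤ ∫ x, Real.exp (f x) ∂μ := by
  simpa only [zero_add, Real.exp_add, integral_const_mul, Real.exp_zero, one_mul] using
    integral_exp_le_exp_mul_integral_exp (f := fun x => c + g x) (c := 0) hf
      (by simpa only [zero_add] using hgf)

end IntegralExp

section LocalExpansion

variable {H : Type*} [SeminormedAddCommGroup H] [InnerProductSpace ℝ H]

/-- The remainder `R` in the local asymptotically normal (LAN) expansion, at `η₀` and sample size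
`n`, of the log-likelihood `ℓ` with linear part `W`; the LAN norm is the norm of `H`. -/
noncomputable def lanRemainder (ℓ : H → ℝ) (η₀ : H) (n : ℝ) (W : H →ₗ[ℝ] ℝ) (η : H) : ℝ :=
  ℓ η - ℓ η₀ + n / 2 * ‖η - η₀‖ ^ 2 - √n * W (η - η₀)

/-- The remainder `r` in the first-order expansion of the functional `ψ` at `η₀` with representer
`ψ₁`. No second-order term is subtracted: this is Case A1. -/
def functionalRemainder (ψ : H → ℝ) (η₀ ψ₁ : H) (η : H) : ℝ :=
  ψ η - ψ η₀ - ⟪ψ₁, η - η₀⟫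

/-- The perturbed parameter `η_t`, along which the likelihood absorbs the exponential tilt
`t √n (ψ η - ψhat)`. -/
noncomputable def perturbedParameter (n t : ℝ) (ψ₁ η : H) : H :=
  η - (t / √n) • ψ₁

/-- The recentering point `ψhat` of the functional `ψ`: its value at `η₀` corrected by the
stochastic term of the LAN expansion in the direction of the representer `ψ₁`. -/
noncomputable def efficientCentering (ψ : H → ℝ) (η₀ : H) (n : ℝ) (W : H →ₗ[ℝ] ℝ) (ψ₁ : H) : ℝ :=
  ψ η₀ + W ψ₁ / √n

variable (ℓ ψ : H → ℝ) (η₀ ψ₁ : H) {n : ℝ} (t : ℝ) (W : H →ₗ[ℝ] ℝ) (η : H)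

theorem lanRemainder_sub_lanRemainder_perturbedParameter (hn : 0 < n) :
    lanRemainder ℓ η₀ n W η - lanRemainder ℓ η₀ n W (perturbedParameter n t ψ₁ η) =
      ℓ η - ℓ (perturbedParameter n t ψ₁ η) +
        (t * √n * ⟪ψ₁, η - η₀⟫ - t ^ 2 * ‖ψ₁‖ ^ 2 / 2) - t * W ψ₁ := by
  have increment : perturbedParameter n t ψ₁ η - η₀ = (η - η₀) - (t / √n) • ψ₁ :=
    sub_right_comm _ _ _
  have norm_sq : ‖perturbedParameter n t ψ₁ η - η₀‖ ^ 2 =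
      ‖η - η₀‖ ^ 2 - 2 * (t / √n * ⟪ψ₁, η - η₀⟫) + (t / √n) ^ 2 * ‖ψ₁‖ ^ 2 := by
    rw [increment, norm_sub_sq_real, real_inner_smul_right, real_inner_comm, norm_smul, mul_pow,
      Real.norm_eq_abs, sq_abs]
  have linear : W (perturbedParameter n t ψ₁ η - η₀) = W (η - η₀) - t / √n * W ψ₁ := by
    rw [increment, map_sub W (η - η₀), map_smul, smul_eq_mul]
  have linear_coeff : √n * (t / √n) = t := mul_div_cancel₀ t (Real.sqrt_pos.mpr hn).ne'
  have quadratic_coeff : n * (t / √n) ^ 2 = t ^ 2 := by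
    rw [div_pow, Real.sq_sqrt hn.le, mul_div_cancel₀ _ hn.ne']
  have cross_coeff : n * (t / √n) = t * √n := by
    rw [mul_div_left_comm, Real.div_sqrt]
  rw [lanRemainder, lanRemainder, norm_sq, linear]
  linear_combination
    ⟪ψ₁, η - η₀⟫ * cross_coeff - ‖ψ₁‖ ^ 2 / 2 * quadratic_coeff - W ψ₁ * linear_coeff

theorem tilted_logLikelihood_eq (hn : 0 < n) :
    t * √n * (ψ η - efficientCentering ψ η₀ n W ψ₁) + ℓ η - ℓ η₀ =
      (t * √n * functionalRemainder ψ η₀ ψ₁ η + lanRemainder ℓ η₀ n W η -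
        lanRemainder ℓ η₀ n W (perturbedParameter n t ψ₁ η)) +
      t ^ 2 * ‖ψ₁‖ ^ 2 / 2 + (ℓ (perturbedParameter n t ψ₁ η) - ℓ η₀) := by
  have centering : √n * (W ψ₁ / √n) = W ψ₁ := mul_div_cancel₀ _ (Real.sqrt_pos.mpr hn).ne'
  rw [efficientCentering, functionalRemainder]
  linear_combination
    -lanRemainder_sub_lanRemainder_perturbedParameter ℓ η₀ ψ₁ t W η hn - t * centering

end LocalExpansion

theorem bvm_laplace_transform_bounds_caseA1_general
    {H : Type*} [SeminormedAddCommGroup H] [InnerProductSpace ℝ H] [MeasurableSpace H]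
    {ν : Measure H} {η₀ ψ₁ : H} {n t δ : ℝ} (hn : 0 < n) {ℓ ψ : H → ℝ} {W : H →ₗ[ℝ] ℝ}
    (hℓ : AEMeasurable ℓ ν) (hψ : AEMeasurable ψ ν)
    (hbound : ∀ᵐ η ∂ν, |t * √n * functionalRemainder ψ η₀ ψ₁ η + lanRemainder ℓ η₀ n W η -
      lanRemainder ℓ η₀ n W (perturbedParameter n t ψ₁ η)| ≤ δ)
    (hNint : Integrable (fun η => Real.exp (ℓ (perturbedParameter n t ψ₁ η) - ℓ η₀)) ν)
    (hDpos : 0 < ∫ η, Real.exp (ℓ η - ℓ η₀) ∂ν) :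
    let D := ∫ η, Real.exp (ℓ η - ℓ η₀) ∂ν
    let N := ∫ η, Real.exp (ℓ (perturbedParameter n t ψ₁ η) - ℓ η₀) ∂ν
    let tilted := fun η => t * √n * (ψ η - efficientCentering ψ η₀ n W ψ₁) + ℓ η - ℓ η₀
    Integrable (fun η => Real.exp (tilted η)) ν ∧
    Real.exp (-δ) * Real.exp (t ^ 2 * ‖ψ₁‖ ^ 2 / 2) * (N / D) ≤
      1 / D * ∫ η, Real.exp (tilted η) ∂ν ∧
    1 / D * ∫ η, Real.exp (tilted η) ∂ν ≤
      Real.exp δ * Real.exp (t ^ 2 * ‖ψ₁‖ ^ 2 / 2) * (N / D) := by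
  intro D N tilted
  have measurable_tilted : AEMeasurable tilted ν := by fun_prop
  have upper : ∀ᵐ η ∂ν, tilted η ≤
      (δ + t ^ 2 * ‖ψ₁‖ ^ 2 / 2) + (ℓ (perturbedParameter n t ψ₁ η) - ℓ η₀) := by
    filter_upwards [hbound] with η hη
    linarith [tilted_logLikelihood_eq ℓ ψ η₀ ψ₁ t W η hn, (abs_le.mp hη).2]
  have lower : ∀ᵐ η ∂ν,
      (-δ + t ^ 2 * ‖ψ₁‖ ^ 2 / 2) + (ℓ (perturbedParameter n t ψ₁ η) - ℓ η₀) ≤ tilted η := by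
    filter_upwards [hbound] with η hη
    linarith [tilted_logLikelihood_eq ℓ ψ η₀ ψ₁ t W η hn, (abs_le.mp hη).1]
  have integrable_tilted := integrable_exp_of_ae_le_add measurable_tilted hNint upper
  simp only [← Real.exp_add, ← mul_div_assoc, one_div_mul_eq_div]
  exact ⟨integrable_tilted,
    div_le_div_of_nonneg_right (exp_mul_integral_exp_le_integral_exp integrable_tilted lower)
      hDpos.le,
    div_le_div_of_nonneg_right (integral_exp_le_exp_mul_integral_exp hNint upper) hDpos.le⟩

/-- Quantitative form of the Laplace-transform representation (eq. (2.13)) of the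
general semiparametric Bernstein–von Mises theorem, Case A1. -/
theorem bvm_laplace_transform_bounds_caseA1
    {H : Type*} [NormedAddCommGroup H] [InnerProductSpace ℝ H]
    [MeasurableSpace H] [BorelSpace H]
    (μ : Measure H) (A : Set H) (hA : MeasurableSet A)
    (η₀ : H) (n : ℝ) (hn : 0 < n) (t δ : ℝ) (hδ : 0 ≤ δ)
    (ℓ ψ : H → ℝ) (hℓ : Measurable ℓ) (hψ : Measurable ψ)
    (W : H →ₗ[ℝ] ℝ) (ψ₁ : H)
    (R r : H → ℝ)
    (hR : ∀ η, R η = ℓ η - ℓ η₀ + n / 2 * ‖η - η₀‖ ^ 2 - Real.sqrt n * W (η - η₀))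
    (hr : ∀ η, r η = ψ η - ψ η₀ - ⟪ψ₁, η - η₀⟫)
    (ηt : H → H) (hηt : ∀ η, ηt η = η - (t / Real.sqrt n) • ψ₁)
    (ψhat : ℝ) (hψhat : ψhat = ψ η₀ + W ψ₁ / Real.sqrt n)
    (hbound : ∀ η ∈ A, |t * Real.sqrt n * r η + R η - R (ηt η)| ≤ δ)
    (hDint : IntegrableOn (fun η => Real.exp (ℓ η - ℓ η₀)) A μ)
    (D : ℝ) (hDdef : D = ∫ η in A, Real.exp (ℓ η - ℓ η₀) ∂μ) (hDpos : 0 < D)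
    (hNint : IntegrableOn (fun η => Real.exp (ℓ (ηt η) - ℓ η₀)) A μ)
    (Nt : ℝ) (hNdef : Nt = ∫ η in A, Real.exp (ℓ (ηt η) - ℓ η₀) ∂μ) (hNpos : 0 < Nt) :
    IntegrableOn (fun η => Real.exp (t * Real.sqrt n * (ψ η - ψhat) + ℓ η - ℓ η₀)) A μ ∧
    Real.exp (-δ) * Real.exp (t ^ 2 * ‖ψ₁‖ ^ 2 / 2) * (Nt / D) ≤
      (1 / D) * ∫ η in A, Real.exp (t * Real.sqrt n * (ψ η - ψhat) + ℓ η - ℓ η₀) ∂μ ∧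
    (1 / D) * (∫ η in A, Real.exp (t * Real.sqrt n * (ψ η - ψhat) + ℓ η - ℓ η₀) ∂μ) ≤
      Real.exp δ * Real.exp (t ^ 2 * ‖ψ₁‖ ^ 2 / 2) * (Nt / D) := by
  obtain ⟨rfl, rfl, rfl⟩ : R = lanRemainder ℓ η₀ n W ∧ r = functionalRemainder ψ η₀ ψ₁ ∧
    ηt = perturbedParameter n t ψ₁ := ⟨funext hR, funext hr, funext hηt⟩
  subst hψhat hDdef hNdef
  exact bvm_laplace_transform_bounds_caseA1_general hn hℓ.aemeasurable hψ.aemeasurable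
    (ae_restrict_of_forall_mem hA hbound) hNint hDpos
end

section
/- Let (Ω, 𝒜, ℙ) be a probability space and let P be a probability measure on ℝ such that x ↦ e^{tx} is P-integrable for every t ∈ ℝ; write L(t) = ∫ e^{tx} dP(x). For each n ∈ ℕ let Q_n be a random probability measure on ℝ, i.e. a map Q_n : Ω → (probability measures on ℝ) such that ω ↦ ∫ g dQ_n(ω) is measurable for every bounded measurable g : ℝ → ℝ. Assume that for every t ∈ ℝ, x ↦ e^{tx} is Q_n(ω)-integrable for every ω, that ω ↦ ∫ e^{tx} dQ_n(ω)(x) is measurable, and that ∫ e^{tx} dQ_n(ω)(x) converges in probability to L(t) as n → ∞ (that is, ℙ(|∫ e^{tx} dQ_n(ω)(x) − L(t)| > ε) → 0 for every ε > 0). Then for every bounded continuous function f : ℝ → ℝ, the sequence ω ↦ ∫ f dQ_n(ω) converges in probability to ∫ f dP. -/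
open MeasureTheory Filter

/-!
Sets `S ⊆ ι × Ω` whose bad sections `{ω | (i, ω) ∉ S}` have measure tending to zero along `l` form
a filter, and convergence in measure to a constant is convergence along this filter. The theorem
therefore reduces to the continuity theorem for moment generating functions along an arbitrary
filter.

That one follows from Prokhorov's theorem. Bounded exponential moments give tightness, so it is
enough to identify every cluster point. Since `(exp (t * x)) ^ 2 = exp (2 * t * x)`, second moments
of `exp (t * x)` are bounded for small `t`, which makes these functions uniformly integrable and
lets the moment generating functions pass to the limit. A moment generating function which is finite
near `0` determines the measure: it extends analytically to a strip containing the imaginary axis.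
-/

section ConvergenceInMeasure

open scoped Topology

variable {Ω ι E : Type*} [MeasurableSpace Ω] {μ : Measure Ω} {l : Filter ι}

lemma tendsto_measure_zero_of_subset {s t : ι → Set Ω} (ht : Tendsto (fun i ↦ μ (t i)) l (𝓝 0))
    (hst : ∀ i, s i ⊆ t i) : Tendsto (fun i ↦ μ (s i)) l (𝓝 0) :=
  tendsto_of_tendsto_of_tendsto_of_le_of_le tendsto_const_nhds ht (fun _ ↦ zero_le)
    fun i ↦ measure_mono (hst i)

lemma tendstoInMeasure_iff_lt_dist [PseudoMetricSpace E] {f : ι → Ω → E} {g : Ω → E} :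
    TendstoInMeasure μ f l g ↔
      ∀ ε > (0 : ℝ), Tendsto (fun i ↦ μ {ω | ε < dist (f i ω) (g ω)}) l (𝓝 0) := by
  rw [tendstoInMeasure_iff_dist]
  constructor <;> intro h ε hε
  · exact tendsto_measure_zero_of_subset (h ε hε) fun _ ↦
      Set.ofPred_subset_ofPred.2 fun _ ↦ le_of_lt
  · exact tendsto_measure_zero_of_subset (h (ε / 2) (half_pos hε)) fun _ ↦
      Set.ofPred_subset_ofPred.2 fun _ ↦ (half_lt_self hε).trans_le

/-- The filter of convergence in measure on `ι × Ω`: a set belongs to it when the sections of its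
complement have measure tending to zero along `l`. Sections need not be measurable, `μ` being used
as an outer measure. -/
def inMeasureFilter (μ : Measure Ω) (l : Filter ι) : Filter (ι × Ω) :=
  comk (fun s ↦ Tendsto (fun i ↦ μ (Prod.mk i ⁻¹' s)) l (𝓝 0))
    (by simpa only [Set.preimage_empty, measure_empty] using tendsto_const_nhds)
    (fun _ ht _ hst ↦ tendsto_measure_zero_of_subset ht fun _ ↦ Set.preimage_mono hst)
    (fun _ hs _ ht ↦ tendsto_of_tendsto_of_tendsto_of_le_of_le tendsto_const_nhds
      (add_zero (0 : ENNReal) ▸ hs.add ht) (fun _ ↦ zero_le) fun _ ↦ measure_union_le _ _)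

lemma eventually_inMeasureFilter_iff {p : ι × Ω → Prop} :
    (∀ᶠ q in inMeasureFilter μ l, p q) ↔ Tendsto (fun i ↦ μ {ω | ¬ p (i, ω)}) l (𝓝 0) :=
  Iff.rfl

lemma eventually_inMeasureFilter_of_ae {p : ι × Ω → Prop}
    (h : ∀ᶠ i in l, ∀ᵐ ω ∂μ, p (i, ω)) : ∀ᶠ q in inMeasureFilter μ l, p q :=
  eventually_inMeasureFilter_iff.2 (tendsto_const_nhds.congr' (h.mono fun _ hi ↦ hi.symm))

lemma tendstoInMeasure_const_iff_tendsto_inMeasureFilter [PseudoEMetricSpace E]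
    {f : ι → Ω → E} {c : E} :
    TendstoInMeasure μ f l (fun _ ↦ c) ↔
      Tendsto (Function.uncurry f) (inMeasureFilter μ l) (𝓝 c) := by
  simp only [EMetric.tendsto_nhds, eventually_inMeasureFilter_iff, not_lt, TendstoInMeasure,
    Function.uncurry_apply_pair, gt_iff_lt]

end ConvergenceInMeasure

section WeakConvergence

open scoped Topology ENNReal

variable {Ω : Type*} [MeasurableSpace Ω]

lemma sub_min_le_sq_div (x : ℝ) {c : ℝ} (hc : 0 < c) : x - min x c ≤ x ^ 2 / c := by
  rcases le_total x c with hxc | hcx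
  · rw [min_eq_left hxc, sub_self]
    positivity
  · rw [min_eq_right hcx, le_div_iff₀ hc]
    nlinarith

lemma abs_integral_sub_integral_min_le {μ : Measure Ω} [IsFiniteMeasure μ] {g : Ω → ℝ}
    (hg : MemLp g 2 μ) {c : ℝ} (hc : 0 < c) :
    |∫ x, g x ∂μ - ∫ x, min (g x) c ∂μ| ≤ (∫ x, g x ^ 2 ∂μ) / c := by
  have g_int : Integrable g μ := hg.integrable one_le_two
  have min_int : Integrable (fun x ↦ min (g x) c) μ := g_int.inf (integrable_const c)
  rw [← integral_sub g_int min_int, ← integral_div,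
    abs_of_nonneg (integral_nonneg fun x ↦ sub_nonneg.2 (min_le_left _ _))]
  exact integral_mono (g_int.sub min_int) (hg.integrable_sq.div_const c)
    fun x ↦ sub_min_le_sq_div (g x) hc

lemma tendsto_min_natCast (x : ℝ) : Tendsto (fun n : ℕ ↦ min x n) atTop (𝓝 x) := by
  refine tendsto_const_nhds.congr' ?_
  filter_upwards [tendsto_natCast_atTop_atTop.eventually_ge_atTop x] with n hn
  exact (min_eq_left hn).symm

lemma tendsto_integral_min_natCast {μ : Measure Ω} [IsFiniteMeasure μ] {g : Ω → ℝ}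
    (hg : Integrable g μ) :
    Tendsto (fun n : ℕ ↦ ∫ x, min (g x) n ∂μ) atTop (𝓝 (∫ x, g x ∂μ)) :=
  integral_tendsto_of_tendsto_of_monotone (fun n ↦ hg.inf (integrable_const (n : ℝ))) hg
    (ae_of_all _ fun _ _ _ hmn ↦ min_le_min_left _ (Nat.cast_le.2 hmn))
    (ae_of_all _ fun x ↦ tendsto_min_natCast (g x))

lemma integrable_of_forall_integral_min_natCast_le {μ : Measure Ω} [IsFiniteMeasure μ] {g : Ω → ℝ}
    (hg : AEStronglyMeasurable g μ) (hg₀ : 0 ≤ g) {C : ℝ}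
    (hC : ∀ n : ℕ, ∫ x, min (g x) n ∂μ ≤ C) : Integrable g μ := by
  have min_nonneg (n : ℕ) (x : Ω) : 0 ≤ min (g x) (n : ℝ) := le_min (hg₀ x) n.cast_nonneg
  have min_meas (n : ℕ) : AEStronglyMeasurable (fun x ↦ min (g x) (n : ℝ)) μ :=
    hg.inf aestronglyMeasurable_const
  have min_int (n : ℕ) : Integrable (fun x ↦ min (g x) (n : ℝ)) μ :=
    .of_bound (min_meas n) n (ae_of_all _ fun x ↦ by
      rw [Real.norm_of_nonneg (min_nonneg n x)]
      exact min_le_right _ _)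
  have lintegral_min_le (n : ℕ) : ∫⁻ x, ENNReal.ofReal (min (g x) n) ∂μ ≤ ENNReal.ofReal C := by
    rw [← ofReal_integral_eq_lintegral_ofReal (min_int n) (ae_of_all _ (min_nonneg n))]
    exact ENNReal.ofReal_le_ofReal (hC n)
  have lintegral_min_tendsto : Tendsto (fun n : ℕ ↦ ∫⁻ x, ENNReal.ofReal (min (g x) n) ∂μ) atTop
      (𝓝 (∫⁻ x, ENNReal.ofReal (g x) ∂μ)) :=
    lintegral_tendsto_of_tendsto_of_monotone (fun n ↦ (min_meas n).aemeasurable.ennreal_ofReal)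
      (ae_of_all _ fun x m n hmn ↦
        ENNReal.ofReal_le_ofReal (min_le_min_left _ (Nat.cast_le.2 hmn)))
      (ae_of_all _ fun x ↦ ENNReal.tendsto_ofReal (tendsto_min_natCast (g x)))
  refine ⟨hg, (hasFiniteIntegral_iff_ofReal (ae_of_all _ hg₀)).2 ?_⟩
  exact (le_of_tendsto' lintegral_min_tendsto lintegral_min_le).trans_lt ENNReal.ofReal_lt_top

lemma isTightMeasureSet_setOf_lintegral_le [TopologicalSpace Ω] {V : Ω → ℝ≥0∞} (hV : Measurable V)
    (hV_top : Tendsto V (cocompact Ω) (𝓝 ∞)) {C : ℝ≥0∞} (hC : C ≠ ∞) :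
    IsTightMeasureSet {μ : Measure Ω | ∫⁻ x, V x ∂μ ≤ C} := by
  rw [isTightMeasureSet_iff_exists_isCompact_measure_compl_le]
  intro ε hε
  have div_tendsto : Tendsto (fun n : ℕ ↦ C / n) atTop (𝓝 0) := by
    simpa only [ENNReal.div_top] using
      ENNReal.Tendsto.const_div ENNReal.tendsto_nat_nhds_top (.inr hC)
  obtain ⟨n, hn, n_pos⟩ :=
    ((div_tendsto.eventually_le_const hε).and (eventually_gt_atTop 0)).exists
  obtain ⟨K, K_compact, hK⟩ :=
    mem_cocompact.1 (hV_top.eventually_const_le (ENNReal.natCast_lt_top n))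
  refine ⟨K, K_compact, fun μ hμ ↦ ?_⟩
  calc μ Kᶜ ≤ μ {x | n ≤ V x} := measure_mono hK
    _ ≤ (∫⁻ x, V x ∂μ) / n :=
      meas_ge_le_lintegral_div hV.aemeasurable (by simpa using n_pos.ne') (ENNReal.natCast_ne_top n)
    _ ≤ C / n := by gcongr; exact hμ
    _ ≤ ε := hn

variable [TopologicalSpace Ω] [OpensMeasurableSpace Ω] {ι : Type*} {l : Filter ι}
  {μ : ι → ProbabilityMeasure Ω} {ν : ProbabilityMeasure Ω} {g : Ω → ℝ}

lemma tendsto_integral_of_continuous_of_abs_le (h : Tendsto μ l (𝓝 ν)) (hg : Continuous g) {C : ℝ}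
    (hC : ∀ x, |g x| ≤ C) : Tendsto (fun i ↦ ∫ x, g x ∂(μ i : Measure Ω)) l
      (𝓝 (∫ x, g x ∂(ν : Measure Ω))) :=
  ProbabilityMeasure.tendsto_iff_forall_integral_tendsto.1 h (.ofNormedAddCommGroup g hg C hC)

lemma tendsto_integral_min_natCast_of_tendsto (h : Tendsto μ l (𝓝 ν)) (hg : Continuous g)
    (hg₀ : 0 ≤ g) (n : ℕ) : Tendsto (fun i ↦ ∫ x, min (g x) n ∂(μ i : Measure Ω)) l
      (𝓝 (∫ x, min (g x) n ∂(ν : Measure Ω))) :=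
  tendsto_integral_of_continuous_of_abs_le h (hg.min continuous_const) fun x ↦
    (abs_of_nonneg (le_min (hg₀ x) n.cast_nonneg)).trans_le (min_le_right _ _)

lemma integrable_of_tendsto_of_integral_le [l.NeBot] (h : Tendsto μ l (𝓝 ν)) (hg : Continuous g)
    (hg₀ : 0 ≤ g) (hg_int : ∀ᶠ i in l, Integrable g (μ i : Measure Ω)) {C : ℝ}
    (hC : ∀ᶠ i in l, ∫ x, g x ∂(μ i : Measure Ω) ≤ C) : Integrable g (ν : Measure Ω) := by
  refine integrable_of_forall_integral_min_natCast_le (C := C)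
    hg.measurable.aestronglyMeasurable hg₀ fun n ↦
      le_of_tendsto (tendsto_integral_min_natCast_of_tendsto h hg hg₀ n) ?_
  filter_upwards [hg_int, hC] with i hi hiC
  exact (integral_mono (hi.inf (integrable_const (n : ℝ))) hi fun _ ↦ min_le_left _ _).trans hiC

lemma tendsto_integral_of_tendsto_of_integral_sq_le (h : Tendsto μ l (𝓝 ν)) (hg : Continuous g)
    (hg₀ : 0 ≤ g) (hg_memLp : ∀ᶠ i in l, MemLp g 2 (μ i : Measure Ω))
    (hν : Integrable g (ν : Measure Ω)) {C : ℝ}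
    (hC : ∀ᶠ i in l, ∫ x, g x ^ 2 ∂(μ i : Measure Ω) ≤ C) :
    Tendsto (fun i ↦ ∫ x, g x ∂(μ i : Measure Ω)) l (𝓝 (∫ x, g x ∂(ν : Measure Ω))) := by
  have unif : TendstoUniformlyOnFilter (fun (n : ℕ) i ↦ ∫ x, min (g x) n ∂(μ i : Measure Ω))
      (fun i ↦ ∫ x, g x ∂(μ i : Measure Ω)) atTop l := by
    rw [Metric.tendstoUniformlyOnFilter_iff]
    intro ε hε
    have tail : ∀ᶠ n : ℕ in atTop, C / n < ε ∧ 0 < n :=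
      ((tendsto_const_div_atTop_nhds_zero_nat C).eventually_lt_const hε).and
        (eventually_gt_atTop 0)
    filter_upwards [tail.prod_mk (hg_memLp.and hC)] with ⟨n, i⟩ ⟨⟨hn, n_pos⟩, hi, hiC⟩
    calc |∫ x, g x ∂(μ i : Measure Ω) - ∫ x, min (g x) n ∂(μ i : Measure Ω)|
        ≤ (∫ x, g x ^ 2 ∂(μ i : Measure Ω)) / n :=
          abs_integral_sub_integral_min_le hi (Nat.cast_pos.2 n_pos)
      _ ≤ C / n := by gcongr
      _ < ε := hn
  exact unif.tendsto_of_eventually_tendsto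
    (.of_forall (tendsto_integral_min_natCast_of_tendsto h hg hg₀))
    (tendsto_integral_min_natCast hν)

end WeakConvergence

section MomentGeneratingFunction

open ProbabilityTheory
open scoped Topology

lemma measure_ext_of_mgf_eventuallyEq {μ ν : Measure ℝ} [IsFiniteMeasure μ] [IsFiniteMeasure ν]
    (hμ : 0 ∈ interior (integrableExpSet id μ)) (hν : 0 ∈ interior (integrableExpSet id ν))
    (h : mgf id μ =ᶠ[𝓝 0] mgf id ν) : μ = ν := by
  let I := interior (integrableExpSet id μ) ∩ interior (integrableExpSet id ν)
  have strip_preconnected : IsPreconnected (Complex.re ⁻¹' I) :=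
    ((convex_integrableExpSet.interior.inter convex_integrableExpSet.interior).linear_preimage
      Complex.reLm).isPreconnected
  have ofReal_tendsto : Tendsto ((↑) : ℝ → ℂ) (𝓝[≠] 0) (𝓝[≠] 0) :=
    Complex.continuous_ofReal.continuousAt.continuousWithinAt.tendsto_nhdsWithin
      fun t ht ↦ by simpa using ht
  have frequently_eq : ∃ᶠ z in 𝓝[≠] (0 : ℂ), complexMGF id μ z = complexMGF id ν z := by
    refine ofReal_tendsto.frequently (Eventually.frequently ?_)
    filter_upwards [h.filter_mono nhdsWithin_le_nhds] with t ht
    rw [complexMGF_ofReal, complexMGF_ofReal, ht]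
  have eqOn_strip : Set.EqOn (complexMGF id μ) (complexMGF id ν) (Complex.re ⁻¹' I) :=
    (analyticOnNhd_complexMGF.mono fun _ hz ↦ hz.1).eqOn_of_preconnected_of_frequently_eq
      (analyticOnNhd_complexMGF.mono fun _ hz ↦ hz.2) strip_preconnected ⟨hμ, hν⟩ frequently_eq
  refine Measure.ext_of_charFun (funext fun t ↦ ?_)
  rw [← complexMGF_id_mul_I, ← complexMGF_id_mul_I]
  exact eqOn_strip (by simpa [I] using And.intro hμ hν)

lemma tendsto_exp_mul_add_exp_neg_mul_cocompact {t : ℝ} (ht : 0 < t) :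
    Tendsto (fun x ↦ Real.exp (t * x) + Real.exp (-t * x)) (cocompact ℝ) atTop := by
  rw [cocompact_eq_atBot_atTop, tendsto_sup]
  constructor
  · exact tendsto_atTop_mono (fun _ ↦ le_add_of_nonneg_left (Real.exp_pos _).le)
      (Real.tendsto_exp_atTop.comp (tendsto_id.const_mul_atBot_of_neg (neg_neg_of_pos ht)))
  · exact tendsto_atTop_mono (fun _ ↦ le_add_of_nonneg_right (Real.exp_pos _).le)
      (Real.tendsto_exp_atTop.comp (tendsto_id.const_mul_atTop ht))

lemma isTightMeasureSet_setOf_mgf_le {t : ℝ} (ht : 0 < t) (C : ℝ) :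
    IsTightMeasureSet {μ : Measure ℝ | t ∈ integrableExpSet id μ ∧ -t ∈ integrableExpSet id μ ∧
      mgf id μ t ≤ C ∧ mgf id μ (-t) ≤ C} := by
  let V : ℝ → ℝ := fun x ↦ Real.exp (t * x) + Real.exp (-t * x)
  have V_nonneg (x : ℝ) : 0 ≤ V x := by positivity
  refine (isTightMeasureSet_setOf_lintegral_le (V := fun x ↦ ENNReal.ofReal (V x)) (by fun_prop)
    (ENNReal.tendsto_ofReal_nhds_top.2 (tendsto_exp_mul_add_exp_neg_mul_cocompact ht))
    (C := ENNReal.ofReal (C + C)) ENNReal.ofReal_ne_top).subset ?_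
  rintro μ ⟨int_pos, int_neg, mgf_pos_le, mgf_neg_le⟩
  calc ∫⁻ x, ENNReal.ofReal (V x) ∂μ = ENNReal.ofReal (∫ x, V x ∂μ) :=
        (ofReal_integral_eq_lintegral_ofReal (int_pos.add int_neg) (ae_of_all _ V_nonneg)).symm
    _ = ENNReal.ofReal (mgf id μ t + mgf id μ (-t)) :=
        congrArg ENNReal.ofReal (integral_add int_pos int_neg)
    _ ≤ ENNReal.ofReal (C + C) := ENNReal.ofReal_le_ofReal (add_le_add mgf_pos_le mgf_neg_le)

variable {ι : Type*} {l : Filter ι} {μ : ι → ProbabilityMeasure ℝ} {ν : ProbabilityMeasure ℝ}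

lemma mem_integrableExpSet_of_tendsto [l.NeBot] (h : Tendsto μ l (𝓝 ν)) {t c : ℝ}
    (hμ : ∀ᶠ i in l, t ∈ integrableExpSet id (μ i : Measure ℝ))
    (hc : Tendsto (fun i ↦ mgf id (μ i : Measure ℝ) t) l (𝓝 c)) :
    t ∈ integrableExpSet id (ν : Measure ℝ) :=
  integrable_of_tendsto_of_integral_le h (by fun_prop) (fun _ ↦ (Real.exp_pos _).le) hμ
    (hc.eventually_le_const (lt_add_one c))

lemma exp_mul_sq (t x : ℝ) : Real.exp (t * x) ^ 2 = Real.exp (2 * t * x) := by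
  rw [← Real.exp_nat_mul, Nat.cast_ofNat, mul_assoc]

lemma tendsto_mgf_of_tendsto (h : Tendsto μ l (𝓝 ν)) {t c : ℝ}
    (hν : t ∈ integrableExpSet id (ν : Measure ℝ))
    (hμ : ∀ᶠ i in l, 2 * t ∈ integrableExpSet id (μ i : Measure ℝ))
    (hc : Tendsto (fun i ↦ mgf id (μ i : Measure ℝ) (2 * t)) l (𝓝 c)) :
    Tendsto (fun i ↦ mgf id (μ i : Measure ℝ) t) l (𝓝 (mgf id (ν : Measure ℝ) t)) := by
  refine tendsto_integral_of_tendsto_of_integral_sq_le (C := c + 1) h (by fun_prop)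
    (fun _ ↦ (Real.exp_pos _).le) ?_ hν ?_
  · filter_upwards [hμ] with i hi
    rw [memLp_two_iff_integrable_sq (by fun_prop)]
    simp only [exp_mul_sq]
    exact hi
  · simp only [exp_mul_sq]
    exact hc.eventually_le_const (lt_add_one c)

lemma eq_of_tendsto_of_tendsto_mgf [l.NeBot] {ν' : ProbabilityMeasure ℝ} (h : Tendsto μ l (𝓝 ν'))
    (hν : ∀ᶠ t in 𝓝 0, t ∈ integrableExpSet id (ν : Measure ℝ))
    (hμ : ∀ᶠ t in 𝓝 0, ∀ᶠ i in l, t ∈ integrableExpSet id (μ i : Measure ℝ))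
    (hmgf : ∀ᶠ t in 𝓝 0,
      Tendsto (fun i ↦ mgf id (μ i : Measure ℝ) t) l (𝓝 (mgf id (ν : Measure ℝ) t))) :
    ν' = ν := by
  have hν' : ∀ᶠ t in 𝓝 0, t ∈ integrableExpSet id (ν' : Measure ℝ) := by
    filter_upwards [hμ, hmgf] with t using mem_integrableExpSet_of_tendsto h
  have double_tendsto : Tendsto (fun t : ℝ ↦ 2 * t) (𝓝 0) (𝓝 0) :=
    (continuous_const_mul 2).tendsto' 0 0 (mul_zero 2)
  suffices mgf id (ν' : Measure ℝ) =ᶠ[𝓝 0] mgf id (ν : Measure ℝ) from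
    Subtype.ext <| measure_ext_of_mgf_eventuallyEq (μ := (ν' : Measure ℝ)) (ν := (ν : Measure ℝ))
      (mem_interior_iff_mem_nhds.2 hν') (mem_interior_iff_mem_nhds.2 hν) this
  filter_upwards [hν', hmgf, double_tendsto.eventually hμ, double_tendsto.eventually hmgf]
    with t ht hmgf_t hμ_double hmgf_double
  exact tendsto_nhds_unique (tendsto_mgf_of_tendsto h ht hμ_double hmgf_double) hmgf_t

lemma exists_isCompact_eventually_mem_of_tendsto_mgf {m : ℝ → ℝ}
    (hμ : ∀ᶠ t in 𝓝 0, ∀ᶠ i in l, t ∈ integrableExpSet id (μ i : Measure ℝ))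
    (hm : ∀ᶠ t in 𝓝 0, Tendsto (fun i ↦ mgf id (μ i : Measure ℝ) t) l (𝓝 (m t))) :
    ∃ K : Set (ProbabilityMeasure ℝ), IsCompact K ∧ ∀ᶠ i in l, μ i ∈ K := by
  have neg_tendsto : Tendsto (fun t : ℝ ↦ -t) (𝓝 0) (𝓝 0) := continuous_neg.tendsto' 0 0 neg_zero
  obtain ⟨t, ⟨⟨hμ_pos, hm_pos⟩, hμ_neg, hm_neg⟩, t_pos⟩ :=
    ((((hμ.and hm).and (neg_tendsto.eventually (hμ.and hm))).filter_mono
      (nhdsWithin_le_nhds (s := Set.Ioi 0))).and self_mem_nhdsWithin).exists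
  let C := max (m t) (m (-t)) + 1
  let S : Set (ProbabilityMeasure ℝ) := {ρ | t ∈ integrableExpSet id (ρ : Measure ℝ) ∧
    -t ∈ integrableExpSet id (ρ : Measure ℝ) ∧
    mgf id (ρ : Measure ℝ) t ≤ C ∧ mgf id (ρ : Measure ℝ) (-t) ≤ C}
  refine ⟨closure S, isCompact_closure_of_isTightMeasureSet
    ((isTightMeasureSet_setOf_mgf_le t_pos C).subset (Set.image_subset_iff.2 fun _ ↦ id)), ?_⟩
  filter_upwards [hμ_pos, hμ_neg,
    hm_pos.eventually_le_const (lt_add_of_le_of_pos (le_max_left _ _) one_pos),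
    hm_neg.eventually_le_const (lt_add_of_le_of_pos (le_max_right _ _) one_pos)]
    with i int_pos int_neg mgf_pos_le mgf_neg_le
  exact subset_closure ⟨int_pos, int_neg, mgf_pos_le, mgf_neg_le⟩

theorem tendsto_probabilityMeasure_of_tendsto_mgf
    (hν : ∀ᶠ t in 𝓝 0, t ∈ integrableExpSet id (ν : Measure ℝ))
    (hμ : ∀ᶠ t in 𝓝 0, ∀ᶠ i in l, t ∈ integrableExpSet id (μ i : Measure ℝ))
    (hmgf : ∀ᶠ t in 𝓝 0,
      Tendsto (fun i ↦ mgf id (μ i : Measure ℝ) t) l (𝓝 (mgf id (ν : Measure ℝ) t))) :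
    Tendsto μ l (𝓝 ν) := by
  obtain ⟨K, K_compact, hK⟩ := exists_isCompact_eventually_mem_of_tendsto_mgf hμ hmgf
  refine K_compact.tendsto_nhds_of_unique_mapClusterPt hK fun ν' _ hν' ↦ ?_
  obtain ⟨U, hUl, hU⟩ := mapClusterPt_iff_ultrafilter.1 hν'
  exact eq_of_tendsto_of_tendsto_mgf hU hν (hμ.mono fun _ h ↦ hUl h)
    (hmgf.mono fun _ h ↦ h.mono_left hUl)

end MomentGeneratingFunction

open scoped Topology in
theorem laplace_conv_implies_bounded_continuous_conv_general
    {Ω ι : Type*} [MeasurableSpace Ω] (ℙ : Measure Ω) (l : Filter ι)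
    (P : Measure ℝ) [IsProbabilityMeasure P]
    (hPint : ∀ᶠ t in 𝓝 (0 : ℝ), Integrable (fun x ↦ Real.exp (t * x)) P)
    (Q : ι → Ω → Measure ℝ) (hQprob : ∀ i ω, IsProbabilityMeasure (Q i ω))
    (hQint : ∀ᶠ t in 𝓝 (0 : ℝ), ∀ᶠ i in l, ∀ᵐ ω ∂ℙ,
      Integrable (fun x ↦ Real.exp (t * x)) (Q i ω))
    (hconv : ∀ᶠ t in 𝓝 (0 : ℝ), TendstoInMeasure ℙ (fun i ω ↦ ∫ x, Real.exp (t * x) ∂(Q i ω)) l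
      fun _ ↦ ∫ x, Real.exp (t * x) ∂P)
    (f : ℝ → ℝ) (hf : Continuous f) (hfb : ∃ C, ∀ x, |f x| ≤ C) :
    TendstoInMeasure ℙ (fun i ω ↦ ∫ x, f x ∂(Q i ω)) l fun _ ↦ ∫ x, f x ∂P := by
  obtain ⟨C, hC⟩ := hfb
  simp only [tendstoInMeasure_const_iff_tendsto_inMeasureFilter] at hconv ⊢
  let q : ι × Ω → ProbabilityMeasure ℝ := fun p ↦ ⟨Q p.1 p.2, hQprob p.1 p.2⟩
  have q_tendsto : Tendsto q (inMeasureFilter ℙ l) (𝓝 ⟨P, inferInstance⟩) :=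
    tendsto_probabilityMeasure_of_tendsto_mgf hPint
      (hQint.mono fun _ ht ↦ eventually_inMeasureFilter_of_ae ht) hconv
  exact tendsto_integral_of_continuous_of_abs_le q_tendsto hf hC

/-- Lemma A.1: convergence in probability of all Laplace transforms of a sequence of
random probability measures on ℝ towards the (everywhere finite) Laplace transform of a
fixed probability measure `P` implies convergence in probability of integrals of every
bounded continuous function. -/
theorem laplace_conv_implies_bounded_continuous_conv
    {Ω : Type*} [MeasurableSpace Ω] (ℙ : Measure Ω) [IsProbabilityMeasure ℙ]
    (P : Measure ℝ) [IsProbabilityMeasure P]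
    (hPint : ∀ t : ℝ, Integrable (fun x => Real.exp (t * x)) P)
    (L : ℝ → ℝ) (hL : ∀ t, L t = ∫ x, Real.exp (t * x) ∂P)
    (Q : ℕ → Ω → Measure ℝ) (hQprob : ∀ n ω, IsProbabilityMeasure (Q n ω))
    (hQmeas : ∀ (n : ℕ) (g : ℝ → ℝ), Measurable g → (∃ C, ∀ x, |g x| ≤ C) →
      Measurable (fun ω => ∫ x, g x ∂(Q n ω)))
    (hQint : ∀ (t : ℝ) (n : ℕ) (ω : Ω), Integrable (fun x => Real.exp (t * x)) (Q n ω))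
    (hQLmeas : ∀ (t : ℝ) (n : ℕ), Measurable (fun ω => ∫ x, Real.exp (t * x) ∂(Q n ω)))
    (hconv : ∀ t : ℝ, ∀ ε > (0 : ℝ),
      Tendsto (fun n => ℙ {ω | ε < |(∫ x, Real.exp (t * x) ∂(Q n ω)) - L t|})
        atTop (nhds 0))
    (f : ℝ → ℝ) (hf : Continuous f) (hfb : ∃ C, ∀ x, |f x| ≤ C) :
    ∀ ε > (0 : ℝ),
      Tendsto (fun n => ℙ {ω | ε < |(∫ x, f x ∂(Q n ω)) - ∫ x, f x ∂P|})
        atTop (nhds 0) := by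
  simp only [hL] at hconv
  exact tendstoInMeasure_iff_lt_dist.1 <|
    laplace_conv_implies_bounded_continuous_conv_general ℙ atTop P (.of_forall hPint) Q hQprob
      (.of_forall fun t ↦ .of_forall fun n ↦ .of_forall (hQint t n))
      (.of_forall fun t ↦ tendstoInMeasure_iff_lt_dist.2 (hconv t)) f hf hfb
end

section
/- Let ρ > 0, α > 0, and let f₀ : [0,1] → ℝ be a continuous function satisfying f₀(y) − f₀(x) ≥ ρ(y − x) for all 0 ≤ x ≤ y ≤ 1. Then for every integer p ≥ 0, Σ_{l=p+1}^∞ 2^{−lα} · Σ_{j=0}^{2^l − 1} ∫_{j·2^{−l}}^{(j + 1/2)·2^{−l}} (f₀(x + 2^{−l−1}) − f₀(x)) dx ≥ (ρ/4)·2^{−(p+1)(α+1)}/(1 − 2^{−(α+1)}). -/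
open MeasureTheory

/-!
Write `f₀ x = g x + ρ * x`, where the slope condition on `f₀` says that `g` is monotone on `[0, 1]`.
At resolution `l` the linear part contributes exactly `(ρ / 4) 2⁻ˡ`, which after weighting by
`2 ^ (-lα)` is a geometric series with ratio `2 ^ (-(α + 1))`, summing to the lower bound.
The contribution of `g` is nonnegative. It is also at most `(g 1 - g 0) 2⁻ˡ / 2`, because on each
dyadic cell the integrand is bounded by the increment of `g` over that cell, and these increments
telescope; so the series converges for every `α > -1`.
-/

open Set

section Translate

variable {f : ℝ → ℝ} {a b d : ℝ}

lemma intervalIntegrable_translate_sub (hab : a ≤ b) (hd : 0 ≤ d)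
    (hf : IntervalIntegrable f volume a (b + d)) :
    IntervalIntegrable (fun x ↦ f (x + d) - f x) volume a b := by
  have hright : IntervalIntegrable f volume (a + d) (b + d) :=
    hf.mono_set (by
      rw [uIcc_of_le (by linarith), uIcc_of_le (by linarith)]
      exact Icc_subset_Icc_left (by linarith))
  have hleft : IntervalIntegrable f volume a b :=
    hf.mono_set (by
      rw [uIcc_of_le hab, uIcc_of_le (by linarith)]
      exact Icc_subset_Icc_right (by linarith))
  have htranslate : IntervalIntegrable (fun x ↦ f (x + d)) volume a b := by
    simpa only [add_sub_cancel_right] using hright.comp_add_right d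
  exact htranslate.sub hleft

lemma integral_translate_sub_nonneg (hab : a ≤ b) (hd : 0 ≤ d)
    (hf : MonotoneOn f (Icc a (b + d))) :
    0 ≤ ∫ x in a..b, (f (x + d) - f x) := by
  refine intervalIntegral.integral_nonneg hab fun x ⟨hax, hxb⟩ ↦ sub_nonneg.2 ?_
  exact hf ⟨hax, by linarith⟩ ⟨by linarith, by linarith⟩ (by linarith)

lemma integral_translate_sub_le (hab : a ≤ b) (hd : 0 ≤ d)
    (hf : MonotoneOn f (Icc a (b + d))) :
    ∫ x in a..b, (f (x + d) - f x) ≤ (b - a) * (f (b + d) - f a) := by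
  have hadd : a ≤ b + d := by linarith
  have hfint : IntervalIntegrable f volume a (b + d) :=
    MonotoneOn.intervalIntegrable (by rwa [uIcc_of_le hadd])
  calc ∫ x in a..b, (f (x + d) - f x)
      ≤ ∫ _ in a..b, (f (b + d) - f a) := by
        refine intervalIntegral.integral_mono_on hab (intervalIntegrable_translate_sub hab hd hfint)
          intervalIntegrable_const fun x ⟨hax, hxb⟩ ↦ sub_le_sub ?_ ?_
        · exact hf ⟨by linarith, by linarith⟩ (right_mem_Icc.2 hadd) (by linarith)
        · exact hf (left_mem_Icc.2 hadd) ⟨hax, by linarith⟩ hax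
    _ = (b - a) * (f (b + d) - f a) := by
        rw [intervalIntegral.integral_const, smul_eq_mul]

end Translate

/-- The sum, over the cells `[j * h, (j + 1) * h]` with `j < N`, of the integral of `f` over the
right half of the cell minus its integral over the left half, written as one integral over the left
half by translating the right half onto it. For `h = 2⁻ˡ` and `N = 2ˡ` this is
`2 ^ (-l / 2)` times the sum of the Haar coefficients of `f` at level `l`, for Haar wavelets that
are positive on the right half of their support. -/
noncomputable def haarGridSum (f : ℝ → ℝ) (h : ℝ) (N : ℕ) : ℝ :=
  ∑ j ∈ Finset.range N, ∫ x in (j * h)..((j + 1 / 2) * h), (f (x + h / 2) - f x)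

section HaarGridSum

variable {f : ℝ → ℝ} {h : ℝ} {N : ℕ}

lemma Icc_gridCell_subset (hh : 0 ≤ h) {j : ℕ} (hj : j < N) :
    Icc (j * h) ((j + 1 / 2) * h + h / 2) ⊆ Icc 0 (N * h) := by
  have hjN : (j : ℝ) + 1 ≤ N := by exact_mod_cast hj
  refine Icc_subset_Icc (by positivity) ?_
  calc (j + 1 / 2) * h + h / 2 = (j + 1) * h := by ring
    _ ≤ N * h := by gcongr

lemma haarGridSum_nonneg (hh : 0 ≤ h) (hf : MonotoneOn f (Icc 0 (N * h))) :
    0 ≤ haarGridSum f h N :=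
  Finset.sum_nonneg fun j hj ↦
    integral_translate_sub_nonneg (by linarith) (by positivity)
      (hf.mono (Icc_gridCell_subset hh (Finset.mem_range.1 hj)))

lemma haarGridSum_le (hh : 0 ≤ h) (hf : MonotoneOn f (Icc 0 (N * h))) :
    haarGridSum f h N ≤ h / 2 * (f (N * h) - f 0) := by
  have hcell : ∀ j ∈ Finset.range N,
      ∫ x in (j * h)..((j + 1 / 2) * h), (f (x + h / 2) - f x) ≤
        h / 2 * (f ((j + 1 : ℕ) * h) - f (j * h)) := fun j hj ↦ by
    convert integral_translate_sub_le (by linarith) (by positivity)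
      (hf.mono (Icc_gridCell_subset hh (Finset.mem_range.1 hj))) using 4
    · ring
    · push_cast
      ring
  calc haarGridSum f h N
      ≤ ∑ j ∈ Finset.range N, h / 2 * (f ((j + 1 : ℕ) * h) - f (j * h)) :=
        Finset.sum_le_sum hcell
    _ = h / 2 * (f (N * h) - f 0) := by
        rw [← Finset.mul_sum, Finset.sum_range_sub fun j : ℕ ↦ f (j * h), Nat.cast_zero, zero_mul]

lemma haarGridSum_add_linear (hh : 0 ≤ h) (hf : IntervalIntegrable f volume 0 (N * h)) (ρ : ℝ) :
    haarGridSum (fun x ↦ f x + ρ * x) h N = haarGridSum f h N + ρ / 4 * (N * h ^ 2) := by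
  have hcell : ∀ j ∈ Finset.range N,
      ∫ x in (j * h)..((j + 1 / 2) * h), (f (x + h / 2) + ρ * (x + h / 2) - (f x + ρ * x)) =
        (∫ x in (j * h)..((j + 1 / 2) * h), (f (x + h / 2) - f x)) + ρ / 4 * h ^ 2 := fun j hj ↦ by
    have hle : (j : ℝ) * h ≤ (j + 1 / 2) * h := by linarith
    have hfint : IntervalIntegrable f volume (j * h) ((j + 1 / 2) * h + h / 2) :=
      hf.mono_set (by
        rw [uIcc_of_le (by linarith), uIcc_of_le (by positivity)]
        exact Icc_gridCell_subset hh (Finset.mem_range.1 hj))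
    calc ∫ x in (j * h)..((j + 1 / 2) * h), (f (x + h / 2) + ρ * (x + h / 2) - (f x + ρ * x))
        = ∫ x in (j * h)..((j + 1 / 2) * h), (f (x + h / 2) - f x + ρ * (h / 2)) := by
          congr 1 with x
          ring
      _ = (∫ x in (j * h)..((j + 1 / 2) * h), (f (x + h / 2) - f x)) + ρ / 4 * h ^ 2 := by
          rw [intervalIntegral.integral_add
            (intervalIntegrable_translate_sub hle (by positivity) hfint) intervalIntegrable_const,
            intervalIntegral.integral_const, smul_eq_mul]
          ring
  rw [haarGridSum, Finset.sum_congr rfl hcell, Finset.sum_add_distrib, Finset.sum_const,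
    Finset.card_range, nsmul_eq_mul, haarGridSum]
  ring

end HaarGridSum

section DyadicLevels

variable {g : ℝ → ℝ} {α : ℝ}

lemma rpow_neg_mul_mul_inv_pow {b : ℝ} (hb : 0 < b) (α : ℝ) (l : ℕ) :
    b ^ (-(l : ℝ) * α) * (b ^ l)⁻¹ = (b ^ (-(α + 1))) ^ l := by
  rw [← Real.rpow_natCast b l, ← Real.rpow_neg hb.le, ← Real.rpow_add hb,
    ← Real.rpow_mul_natCast hb.le]
  ring_nf

lemma hasSum_geometric_tail {r : ℝ} (hr₀ : 0 ≤ r) (hr₁ : r < 1) (m : ℕ) :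
    HasSum (fun l : ℕ ↦ r ^ (l + m)) (r ^ m / (1 - r)) := by
  simpa only [pow_add, mul_comm, div_eq_mul_inv] using
    (hasSum_geometric_of_lt_one hr₀ hr₁).mul_left (r ^ m)

lemma two_rpow_neg_add_one_lt_one (hα : -1 < α) : (2 : ℝ) ^ (-(α + 1)) < 1 :=
  Real.rpow_lt_one_of_one_lt_of_neg one_lt_two (by linarith)

lemma haarGridSum_dyadic_nonneg (hg : MonotoneOn g (Icc 0 1)) (l : ℕ) :
    0 ≤ haarGridSum g ((2 : ℝ) ^ l)⁻¹ (2 ^ l) :=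
  haarGridSum_nonneg (by positivity) (by simpa using hg)

lemma summable_rpow_mul_haarGridSum (hα : -1 < α) (hg : MonotoneOn g (Icc 0 1)) :
    Summable fun l : ℕ ↦ (2 : ℝ) ^ (-(l : ℝ) * α) * haarGridSum g ((2 : ℝ) ^ l)⁻¹ (2 ^ l) := by
  have hgeom := summable_geometric_of_lt_one (by positivity) (two_rpow_neg_add_one_lt_one hα)
  refine .of_nonneg_of_le
    (fun l ↦ mul_nonneg (by positivity) (haarGridSum_dyadic_nonneg hg l)) (fun l ↦ ?_)
    (hgeom.mul_left ((g 1 - g 0) / 2))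
  have hlevel : haarGridSum g ((2 : ℝ) ^ l)⁻¹ (2 ^ l) ≤ ((2 : ℝ) ^ l)⁻¹ / 2 * (g 1 - g 0) := by
    simpa using haarGridSum_le (f := g) (h := ((2 : ℝ) ^ l)⁻¹) (N := 2 ^ l) (by positivity)
      (by simpa using hg)
  calc (2 : ℝ) ^ (-(l : ℝ) * α) * haarGridSum g ((2 : ℝ) ^ l)⁻¹ (2 ^ l)
      ≤ (2 : ℝ) ^ (-(l : ℝ) * α) * (((2 : ℝ) ^ l)⁻¹ / 2 * (g 1 - g 0)) := by gcongr
    _ = (g 1 - g 0) / 2 * ((2 : ℝ) ^ (-(α + 1))) ^ l := by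
        rw [← rpow_neg_mul_mul_inv_pow two_pos]
        ring

lemma rpow_mul_haarGridSum_add_linear (hg : MonotoneOn g (Icc 0 1)) (ρ α : ℝ) (l : ℕ) :
    (2 : ℝ) ^ (-(l : ℝ) * α) * haarGridSum (fun x ↦ g x + ρ * x) ((2 : ℝ) ^ l)⁻¹ (2 ^ l) =
      ρ / 4 * ((2 : ℝ) ^ (-(α + 1))) ^ l +
        (2 : ℝ) ^ (-(l : ℝ) * α) * haarGridSum g ((2 : ℝ) ^ l)⁻¹ (2 ^ l) := by
  have hfint : IntervalIntegrable g volume 0 ((2 ^ l : ℕ) * ((2 : ℝ) ^ l)⁻¹) :=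
    MonotoneOn.intervalIntegrable (by simpa using hg)
  rw [haarGridSum_add_linear (by positivity) hfint, ← rpow_neg_mul_mul_inv_pow two_pos]
  push_cast
  field

lemma le_tsum_rpow_mul_haarGridSum_add_linear (hα : -1 < α) (hg : MonotoneOn g (Icc 0 1))
    (ρ : ℝ) (m : ℕ) :
    ρ / 4 * (2 : ℝ) ^ (-(m : ℝ) * (α + 1)) / (1 - (2 : ℝ) ^ (-(α + 1))) ≤
      ∑' l : ℕ, (2 : ℝ) ^ (-((l + m : ℕ) : ℝ) * α) *
        haarGridSum (fun x ↦ g x + ρ * x) ((2 : ℝ) ^ (l + m))⁻¹ (2 ^ (l + m)) := by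
  set r : ℝ := (2 : ℝ) ^ (-(α + 1)) with hr
  have hrm : (2 : ℝ) ^ (-(m : ℝ) * (α + 1)) = r ^ m := by
    rw [hr, ← Real.rpow_mul_natCast two_pos.le]
    ring_nf
  have hlinear : HasSum (fun l ↦ ρ / 4 * r ^ (l + m)) (ρ / 4 * (r ^ m / (1 - r))) :=
    (hasSum_geometric_tail (by positivity) (two_rpow_neg_add_one_lt_one hα) m).mul_left _
  have hmono := (summable_nat_add_iff m).2 (summable_rpow_mul_haarGridSum hα hg)
  simp only [rpow_mul_haarGridSum_add_linear hg]
  rw [hlinear.summable.tsum_add hmono, hlinear.tsum_eq, hrm, mul_div_assoc]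
  exact le_add_of_nonneg_right <|
    tsum_nonneg fun l ↦ mul_nonneg (by positivity) (haarGridSum_dyadic_nonneg hg (l + m))

end DyadicLevels

theorem haar_bias_lower_bound_general
    (ρ α : ℝ) (hα : -1 < α) (f₀ : ℝ → ℝ)
    (hincr : ∀ x y : ℝ, 0 ≤ x → x ≤ y → y ≤ 1 → ρ * (y - x) ≤ f₀ y - f₀ x)
    (m : ℕ) :
    ρ / 4 * (2 : ℝ) ^ (-(m : ℝ) * (α + 1)) / (1 - (2 : ℝ) ^ (-(α + 1))) ≤
      ∑' l : ℕ,
        (2 : ℝ) ^ (-((l + m : ℕ) : ℝ) * α) *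
          ∑ j ∈ Finset.range (2 ^ (l + m)),
            ∫ x in ((j : ℝ) * ((2 : ℝ) ^ (l + m))⁻¹)..
                (((j : ℝ) + 1 / 2) * ((2 : ℝ) ^ (l + m))⁻¹),
              (f₀ (x + ((2 : ℝ) ^ (l + m + 1))⁻¹) - f₀ x) := by
  have hmono : MonotoneOn (fun x ↦ f₀ x - ρ * x) (Icc 0 1) := fun x hx y hy hxy ↦ by
    linarith [hincr x y hx.1 hxy hy.2]
  have hhalf (n : ℕ) : ((2 : ℝ) ^ (n + 1))⁻¹ = ((2 : ℝ) ^ n)⁻¹ / 2 := by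
    rw [pow_succ, mul_inv, div_eq_mul_inv]
  simpa only [sub_add_cancel, haarGridSum, hhalf] using
    le_tsum_rpow_mul_haarGridSum_add_linear hα hmono ρ m

/-- Core estimate in the proof of Proposition 4.3 (counterexample to BvM for
random-number-of-bins histogram priors): for a true function `f₀` whose increments grow
at least linearly with slope `ρ > 0` on `[0,1]`, the tail sum over resolutions `l > p` of
`2^{-lα}` times the summed increment integrals is bounded below by
`(ρ/4) 2^{-(p+1)(α+1)} / (1 - 2^{-(α+1)})`. -/
theorem haar_bias_lower_bound
    (ρ α : ℝ) (hρ : 0 < ρ) (hα : 0 < α)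
    (f₀ : ℝ → ℝ) (hcont : ContinuousOn f₀ (Set.Icc 0 1))
    (hincr : ∀ x y : ℝ, 0 ≤ x → x ≤ y → y ≤ 1 → ρ * (y - x) ≤ f₀ y - f₀ x)
    (p : ℕ) :
    ρ / 4 * (2 : ℝ) ^ (-(((p : ℝ) + 1)) * (α + 1)) / (1 - (2 : ℝ) ^ (-(α + 1))) ≤
      ∑' l : ℕ,
        (2 : ℝ) ^ (-((l + p + 1 : ℕ) : ℝ) * α) *
          ∑ j ∈ Finset.range (2 ^ (l + p + 1)),
            ∫ x in ((j : ℝ) * ((2 : ℝ) ^ (l + p + 1))⁻¹)..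
                (((j : ℝ) + 1 / 2) * ((2 : ℝ) ^ (l + p + 1))⁻¹),
              (f₀ (x + ((2 : ℝ) ^ (l + p + 2))⁻¹) - f₀ x) := by
  rw [← Nat.cast_add_one p]
  exact haar_bias_lower_bound_general ρ α (by linarith) f₀ hincr (p + 1)
end

section
/- For an integer k ≥ 1, partition [0,1] into I_j = [(j−1)/k, j/k) for j = 1, …, k, and for an integrable function g on [0,1] define its histogram projection g_{[k]} = k·Σ_{j=1}^k (∫_{I_j} g(u) du)·1_{I_j}. Let γ, β ∈ (0,1] and C_a, C_f ≥ 0, and let a, f₀ : [0,1] → ℝ satisfy |a(x) − a(y)| ≤ C_a|x − y|^γ and |f₀(x) − f₀(y)| ≤ C_f|x − y|^β for all x, y ∈ [0,1]. Then |∫₀¹ (a(x) − a_{[k]}(x))·(f₀(x) − f₀_{[k]}(x)) dx| ≤ C_a·C_f·k^{−(γ+β)}. -/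
/-!
The histogram projection of `g` at `x` is the average of `g` over the bin containing `x`, so the
pointwise error `|g x - histProj k g x|` is at most the oscillation of `g` on that bin, which for a
Hölder function of exponent `r` and constant `C` is at most `C * k⁻¹ ^ r`. The product of the two
errors is bounded pointwise, and `[0, 1]` has length one.
-/

open MeasureTheory

/-- The projection of an integrable function `g` on `[0,1]` onto the space of regular
histograms with `k` bins (bins indexed `j = 0, …, k-1`, bin `[j/k, (j+1)/k)`). -/
noncomputable def histProj (k : ℕ) (g : ℝ → ℝ) : ℝ → ℝ := fun x =>
  ∑ j ∈ Finset.range k,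
    Set.indicator (Set.Ico ((j : ℝ) / k) (((j : ℝ) + 1) / k))
      (fun _ => (k : ℝ) * ∫ u in Set.Ico ((j : ℝ) / k) (((j : ℝ) + 1) / k), g u) x

open Set
open scoped NNReal

/-- The `j`-th bin `[j/k, (j+1)/k)` of the regular partition of `[0, 1)` underlying `histProj k`;
it lies in `[0, 1)` only for `j < k`, and is empty for `k = 0` since division by zero gives zero. -/
def histBin (k j : ℕ) : Set ℝ := Ico ((j : ℝ) / k) (((j : ℝ) + 1) / k)

section Bins

variable {k j : ℕ} {x y : ℝ}

lemma measurableSet_histBin : MeasurableSet (histBin k j) := measurableSet_Ico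

lemma histBin_subset_Ico (hj : j < k) : histBin k j ⊆ Ico 0 1 := by
  have hk : (0 : ℝ) < k := by exact_mod_cast j.zero_le.trans_lt hj
  refine Ico_subset_Ico (by positivity) ((div_le_one hk).2 ?_)
  exact_mod_cast hj

lemma histBin_subset_Icc (hj : j < k) : histBin k j ⊆ Icc 0 1 :=
  (histBin_subset_Ico hj).trans Ico_subset_Icc_self

lemma histBin_upper_sub_lower (k j : ℕ) : ((j : ℝ) + 1) / k - (j : ℝ) / k = (k : ℝ)⁻¹ := by
  ring

lemma volume_real_histBin (k j : ℕ) : volume.real (histBin k j) = (k : ℝ)⁻¹ := by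
  rw [histBin, Real.volume_real_Ico, histBin_upper_sub_lower, max_eq_left (by positivity)]

lemma dist_le_of_mem_histBin (hx : x ∈ histBin k j) (hy : y ∈ histBin k j) :
    dist x y ≤ (k : ℝ)⁻¹ :=
  (Real.dist_le_of_mem_Icc (Ico_subset_Icc_self hx) (Ico_subset_Icc_self hy)).trans_eq
    (histBin_upper_sub_lower k j)

lemma mem_histBin_iff_floor_eq (hk : k ≠ 0) (hx : 0 ≤ x) :
    x ∈ histBin k j ↔ ⌊k * x⌋₊ = j := by
  have hk : (0 : ℝ) < k := by positivity
  rw [Nat.floor_eq_iff (by positivity), histBin, mem_Ico, div_le_iff₀' hk, lt_div_iff₀' hk]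

lemma exists_mem_histBin (hk : k ≠ 0) (hx : x ∈ Ico (0 : ℝ) 1) : ∃ j < k, x ∈ histBin k j := by
  refine ⟨⌊k * x⌋₊, (Nat.floor_lt' hk).2 ?_, (mem_histBin_iff_floor_eq hk hx.1).2 rfl⟩
  exact mul_lt_of_lt_one_right (by positivity) hx.2

lemma histBin_index_unique {i : ℕ} (hj : j < k) (hxi : x ∈ histBin k i) (hxj : x ∈ histBin k j) :
    i = j := by
  have hk : k ≠ 0 := Nat.ne_zero_of_lt hj
  have hx : 0 ≤ x := (histBin_subset_Ico hj hxj).1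
  rw [← (mem_histBin_iff_floor_eq hk hx).1 hxi, (mem_histBin_iff_floor_eq hk hx).1 hxj]

end Bins

section Projection

variable {k j : ℕ} {x : ℝ} {g : ℝ → ℝ}

lemma histProj_eq_setAverage (hj : j < k) (hx : x ∈ histBin k j) :
    histProj k g x = ⨍ u in histBin k j, g u := by
  have other_bins : ∀ i ∈ Finset.range k, i ≠ j →
      (histBin k i).indicator (fun _ ↦ (k : ℝ) * ∫ u in histBin k i, g u) x = 0 :=
    fun i _ hij ↦ indicator_of_notMem (fun hxi ↦ hij (histBin_index_unique hj hxi hx)) _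
  calc histProj k g x
      = (histBin k j).indicator (fun _ ↦ (k : ℝ) * ∫ u in histBin k j, g u) x :=
        Finset.sum_eq_single_of_mem j (Finset.mem_range.2 hj) other_bins
    _ = k * ∫ u in histBin k j, g u := indicator_of_mem hx _
    _ = ⨍ u in histBin k j, g u := by
        rw [setAverage_eq, volume_real_histBin, inv_inv, smul_eq_mul]

lemma abs_sub_histProj_le {C : ℝ} (hj : j < k) (hx : x ∈ histBin k j)
    (hg : IntegrableOn g (histBin k j)) (hosc : ∀ u ∈ histBin k j, |g x - g u| ≤ C) :
    |g x - histProj k g x| ≤ C := by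
  have hk : k ≠ 0 := Nat.ne_zero_of_lt hj
  have hpos : volume (histBin k j) ≠ 0 := fun h ↦
    hk (by simpa [Measure.real, h] using (volume_real_histBin k j).symm)
  have values_mem_ball : ∀ u ∈ histBin k j, g u ∈ Metric.closedBall (g x) C := fun u hu ↦ by
    rw [Metric.mem_closedBall']
    exact hosc u hu
  have average_mem_ball : ⨍ u in histBin k j, g u ∈ Metric.closedBall (g x) C :=
    (convex_closedBall (g x) C).set_average_mem Metric.isClosed_closedBall hpos
      measure_Ico_lt_top.ne (ae_restrict_of_forall_mem measurableSet_histBin values_mem_ball) hg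
  rw [histProj_eq_setAverage hj hx]
  exact Metric.mem_closedBall'.1 average_mem_ball

end Projection

lemma holderOnWith_of_dist_le {X Y : Type*} [PseudoMetricSpace X] [PseudoMetricSpace Y]
    {C r : ℝ≥0} {f : X → Y} {s : Set X}
    (h : ∀ x ∈ s, ∀ y ∈ s, dist (f x) (f y) ≤ C * dist x y ^ (r : ℝ)) :
    HolderOnWith C r f s := fun x hx y hy ↦ by
  rw [edist_nndist, edist_nndist, ← ENNReal.coe_rpow_of_nonneg _ r.coe_nonneg]
  exact_mod_cast h x hx y hy

lemma abs_sub_le_of_holderOnWith_of_mem_histBin {k j : ℕ} {C r : ℝ≥0} {g : ℝ → ℝ} {x y : ℝ}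
    (hg : HolderOnWith C r g (Icc 0 1)) (hj : j < k) (hx : x ∈ histBin k j)
    (hy : y ∈ histBin k j) :
    |g x - g y| ≤ C * (k : ℝ) ^ (-(r : ℝ)) := by
  rw [Real.rpow_neg k.cast_nonneg, ← Real.inv_rpow k.cast_nonneg]
  exact hg.dist_le_of_le (histBin_subset_Icc hj hx) (histBin_subset_Icc hj hy)
    (dist_le_of_mem_histBin hx hy)

theorem histogram_no_bias_linear_functional_general {k : ℕ} (hk : 1 ≤ k) {a f₀ : ℝ → ℝ}
    (ha_int : IntegrableOn a (Icc 0 1)) (hf_int : IntegrableOn f₀ (Icc 0 1)) {ωa ωf : ℝ}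
    (ha : ∀ j < k, ∀ x ∈ histBin k j, ∀ y ∈ histBin k j, |a x - a y| ≤ ωa)
    (hf : ∀ j < k, ∀ x ∈ histBin k j, ∀ y ∈ histBin k j, |f₀ x - f₀ y| ≤ ωf) :
    |∫ x in Icc (0 : ℝ) 1, (a x - histProj k a x) * (f₀ x - histProj k f₀ x)| ≤ ωa * ωf := by
  have pointwise : ∀ x ∈ Ico (0 : ℝ) 1,
      ‖(a x - histProj k a x) * (f₀ x - histProj k f₀ x)‖ ≤ ωa * ωf := fun x hx ↦ by
    obtain ⟨j, hj, hxj⟩ := exists_mem_histBin (Nat.one_le_iff_ne_zero.1 hk) hx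
    have hsub : histBin k j ⊆ Icc 0 1 := histBin_subset_Icc hj
    exact norm_mul_le_of_le (abs_sub_histProj_le hj hxj (ha_int.mono_set hsub) (ha j hj x hxj))
      (abs_sub_histProj_le hj hxj (hf_int.mono_set hsub) (hf j hj x hxj))
  rw [integral_Icc_eq_integral_Ico]
  simpa using norm_setIntegral_le_of_norm_le_const (μ := volume) measure_Ico_lt_top pointwise

/-- No-bias estimate for linear functionals under regular histogram priors (proof of
Theorem 4.4): if `a` is `γ`-Hölder and `f₀` is `β`-Hölder on `[0,1]`, the semiparametric
bias `∫ (a - a_{[k]})(f₀ - f₀_{[k]})` is at most `C_a C_f k^{-(γ+β)}`. -/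
theorem histogram_no_bias_linear_functional
    (k : ℕ) (hk : 1 ≤ k) (γ β : ℝ)
    (hγ : γ ∈ Set.Ioc (0 : ℝ) 1) (hβ : β ∈ Set.Ioc (0 : ℝ) 1)
    (Ca Cf : ℝ) (hCa : 0 ≤ Ca) (hCf : 0 ≤ Cf)
    (a f₀ : ℝ → ℝ)
    (ha : ∀ x ∈ Set.Icc (0 : ℝ) 1, ∀ y ∈ Set.Icc (0 : ℝ) 1, |a x - a y| ≤ Ca * |x - y| ^ γ)
    (hf : ∀ x ∈ Set.Icc (0 : ℝ) 1, ∀ y ∈ Set.Icc (0 : ℝ) 1, |f₀ x - f₀ y| ≤ Cf * |x - y| ^ β) :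
    |∫ x in Set.Icc (0 : ℝ) 1, (a x - histProj k a x) * (f₀ x - histProj k f₀ x)| ≤
      Ca * Cf * (k : ℝ) ^ (-(γ + β)) := by
  lift Ca to ℝ≥0 using hCa
  lift Cf to ℝ≥0 using hCf
  lift γ to ℝ≥0 using hγ.1.le
  lift β to ℝ≥0 using hβ.1.le
  have ha : HolderOnWith Ca γ a (Icc 0 1) := holderOnWith_of_dist_le ha
  have hf : HolderOnWith Cf β f₀ (Icc 0 1) := holderOnWith_of_dist_le hf
  calc |∫ x in Icc (0 : ℝ) 1, (a x - histProj k a x) * (f₀ x - histProj k f₀ x)|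
      ≤ Ca * (k : ℝ) ^ (-(γ : ℝ)) * (Cf * (k : ℝ) ^ (-(β : ℝ))) :=
        histogram_no_bias_linear_functional_general hk
          (ha.continuousOn hγ.1).integrableOn_Icc (hf.continuousOn hβ.1).integrableOn_Icc
          (fun _ hj _ hx _ hy ↦ abs_sub_le_of_holderOnWith_of_mem_histBin ha hj hx hy)
          (fun _ hj _ hx _ hy ↦ abs_sub_le_of_holderOnWith_of_mem_histBin hf hj hx hy)
    _ = Ca * Cf * (k : ℝ) ^ (-((γ : ℝ) + β)) := by
        rw [neg_add, Real.rpow_add (by exact_mod_cast hk)]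
        ring
end
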